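/- Let (F₁, F₂) be the CHFIS pair for generalized interpolation data with N = M, x₀ = y₀ = 0 and x_N = y_N = 1/2. Then F₁ is a Lipschitz function of some order δ with respect to the Manhattan metric: there exist δ ∈ (0,1] and a constant c ≥ 0 such that |F₁(X) − F₁(X̄)| ≤ c · (d_M(X, X̄))^δ for all X, X̄ ∈ [0,1/2] × [0,1/2]. -/

import Mathlib

open Real Set

noncomputable section

/-- `z_eva` (resp. `t_eva`) from the paper: `z N M - z N 0 - z 0 M + z 0 0`. -/
def eva (N M : ℕ) (z : ℕ → ℕ → ℝ) : ℝ := z N M - z N 0 - z 0 M + z 0 0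

/-- The coefficient `g_{n,m}` determined by the join-up conditions. -/
def gCoef (N M : ℕ) (x y : ℕ → ℝ) (z t : ℕ → ℕ → ℝ) (a b : ℕ → ℕ → ℝ) (n m : ℕ) : ℝ :=
  (z (n-1) (m-1) - z (n-1) m - z n (m-1) + z n m
    - a n m * eva N M z - b n m * eva N M t) / ((x 0 - x N) * (y 0 - y M))

/-- The coefficient `e_{n,m}`. -/
def eCoef (N M : ℕ) (x y : ℕ → ℝ) (z t : ℕ → ℕ → ℝ) (a b : ℕ → ℕ → ℝ) (n m : ℕ) : ℝ :=
  (z (n-1) (m-1) - z n (m-1) - a n m * (z 0 0 - z N 0) - b n m * (t 0 0 - t N 0)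
    - gCoef N M x y z t a b n m * (x 0 - x N) * y 0) / (x 0 - x N)

/-- The coefficient `f_{n,m}`. -/
def fCoef (N M : ℕ) (x y : ℕ → ℝ) (z t : ℕ → ℕ → ℝ) (a b : ℕ → ℕ → ℝ) (n m : ℕ) : ℝ :=
  (z (n-1) (m-1) - z (n-1) m - a n m * (z 0 0 - z 0 M) - b n m * (t 0 0 - t 0 M)
    - gCoef N M x y z t a b n m * (y 0 - y M) * x 0) / (y 0 - y M)

/-- The coefficient `k_{n,m}`. -/
def kCoef (N M : ℕ) (x y : ℕ → ℝ) (z t : ℕ → ℕ → ℝ) (a b : ℕ → ℕ → ℝ) (n m : ℕ) : ℝ :=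
  z n m - eCoef N M x y z t a b n m * x N - fCoef N M x y z t a b n m * y M
    - a n m * z N M - b n m * t N M - gCoef N M x y z t a b n m * x N * y M

/-- `p_{n,m}(X,Y) = e_{n,m} X + f_{n,m} Y + g_{n,m} X Y + k_{n,m}`. -/
def pMap (N M : ℕ) (x y : ℕ → ℝ) (z t : ℕ → ℕ → ℝ) (a b : ℕ → ℕ → ℝ) (n m : ℕ)
    (X Y : ℝ) : ℝ :=
  eCoef N M x y z t a b n m * X + fCoef N M x y z t a b n m * Y
    + gCoef N M x y z t a b n m * X * Y + kCoef N M x y z t a b n m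

/-- `q_{n,m}(X,Y) = ẽ_{n,m} X + f̃_{n,m} Y + g̃_{n,m} X Y + k̃_{n,m}`; it is `p` built from the
data `t` with parameters `γ` and `0`. -/
def qMap (N M : ℕ) (x y : ℕ → ℝ) (t : ℕ → ℕ → ℝ) (c : ℕ → ℕ → ℝ) (n m : ℕ) (X Y : ℝ) : ℝ :=
  pMap N M x y t t c (fun _ _ => 0) n m X Y

/-- `φ_n` (resp. `ψ_m`): the affine map of `[x₀, x_N]` onto `[x_{n-1}, x_n]`. -/
def phiMap (N : ℕ) (x : ℕ → ℝ) (n : ℕ) (X : ℝ) : ℝ :=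
  x (n-1) + (x n - x (n-1)) * (X - x 0) / (x N - x 0)

/-- Validity of generalized interpolation data: `N, M ≥ 1`, strictly increasing knots,
`|α_{n,m}| < 1` and `|β_{n,m}| + |γ_{n,m}| < 1`. -/
structure DataOK (N M : ℕ) (x y : ℕ → ℝ) (a b c : ℕ → ℕ → ℝ) : Prop where
  hN : 1 ≤ N
  hM : 1 ≤ M
  hx : ∀ i < N, x i < x (i+1)
  hy : ∀ j < M, y j < y (j+1)
  ha : ∀ n m, 1 ≤ n → n ≤ N → 1 ≤ m → m ≤ M → |a n m| < 1
  hbc : ∀ n m, 1 ≤ n → n ≤ N → 1 ≤ m → m ≤ M → |b n m| + |c n m| < 1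

/-- `(F₁, F₂)` is the CHFIS pair for the generalized interpolation data. -/
def IsCHFIS (N M : ℕ) (x y : ℕ → ℝ) (z t : ℕ → ℕ → ℝ) (a b c : ℕ → ℕ → ℝ)
    (F₁ F₂ : ℝ → ℝ → ℝ) : Prop :=
  ContinuousOn (fun P : ℝ × ℝ => F₁ P.1 P.2) (Icc (x 0) (x N) ×ˢ Icc (y 0) (y M)) ∧
  ContinuousOn (fun P : ℝ × ℝ => F₂ P.1 P.2) (Icc (x 0) (x N) ×ˢ Icc (y 0) (y M)) ∧
  (∀ i ≤ N, ∀ j ≤ M, F₁ (x i) (y j) = z i j ∧ F₂ (x i) (y j) = t i j) ∧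
  ∀ n m, 1 ≤ n → n ≤ N → 1 ≤ m → m ≤ M →
    ∀ X ∈ Icc (x 0) (x N), ∀ Y ∈ Icc (y 0) (y M),
      F₁ (phiMap N x n X) (phiMap M y m Y)
        = a n m * F₁ X Y + b n m * F₂ X Y + pMap N M x y z t a b n m X Y ∧
      F₂ (phiMap N x n X) (phiMap M y m Y)
        = c n m * F₂ X Y + qMap N M x y t c n m X Y

/-- The invariance-of-ratio condition between the knots `x, y` and the knots `xs, ys`. -/
def RatioInv (N M : ℕ) (x y xs ys : ℕ → ℝ) : Prop :=
  (∀ n, 1 ≤ n → n ≤ N → (x 0 - x N) / (xs 0 - xs N) = (x (n-1) - x n) / (xs (n-1) - xs n)) ∧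
  (∀ m, 1 ≤ m → m ≤ M → (y 0 - y M) / (ys 0 - ys M) = (y (m-1) - y m) / (ys (m-1) - ys m))

/-- `T : [x₀, x_N] → [xs₀, xs_N]` is the cell-wise affine transfer map, sending
`[x_{n-1}, x_n]` affinely onto `[xs_{n-1}, xs_n]` (one coordinate of `R` resp. `K`). -/
def IsTransfer (N : ℕ) (x xs : ℕ → ℝ) (T : ℝ → ℝ) : Prop :=
  ∀ n, 1 ≤ n → n ≤ N → ∀ X ∈ Icc (x (n-1)) (x n),
    T X = xs (n-1) + (xs n - xs (n-1)) * (X - x (n-1)) / (x n - x (n-1))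

/-- `max { |a n m| : 1 ≤ n ≤ N, 1 ≤ m ≤ M }` (as an `sSup`). -/
def supParam (N M : ℕ) (a : ℕ → ℕ → ℝ) : ℝ :=
  sSup {v : ℝ | ∃ n m, 1 ≤ n ∧ n ≤ N ∧ 1 ≤ m ∧ m ≤ M ∧ v = |a n m|}

/-- `max { (|x_n - xs_n| + |y_m - ys_m|)^δ : 0 ≤ n ≤ N, 0 ≤ m ≤ M }` (as an `sSup`). -/
def supKnotDiff (N M : ℕ) (x xs y ys : ℕ → ℝ) (d : ℝ) : ℝ :=
  sSup {v : ℝ | ∃ n m, n ≤ N ∧ m ≤ M ∧ v = (|x n - xs n| + |y m - ys m|) ^ d}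

/-- `max { |z_{n,m} - zs_{n,m}| : 0 ≤ n ≤ N, 0 ≤ m ≤ M }` (as an `sSup`). -/
def supValDiff (N M : ℕ) (z zs : ℕ → ℕ → ℝ) : ℝ :=
  sSup {v : ℝ | ∃ n m, n ≤ N ∧ m ≤ M ∧ v = |z n m - zs n m|}

/-- `max { |z_{i,j} - z_{k,l}| : 0 ≤ i,j,k,l ≤ N }` (as an `sSup`). -/
def supPairDiff (N : ℕ) (z : ℕ → ℕ → ℝ) : ℝ :=
  sSup {v : ℝ | ∃ i j k l, i ≤ N ∧ j ≤ N ∧ k ≤ N ∧ l ≤ N ∧ v = |z i j - z k l|}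

/-- A function on a finite grid of cells attains its maximum. -/
lemma grid_max (N : ℕ) (hN : 1 ≤ N) (f : ℕ → ℕ → ℝ) :
    ∃ n₀ m₀, (1 ≤ n₀ ∧ n₀ ≤ N ∧ 1 ≤ m₀ ∧ m₀ ≤ N) ∧
      ∀ n m, 1 ≤ n → n ≤ N → 1 ≤ m → m ≤ N → f n m ≤ f n₀ m₀ := by
  obtain ⟨p, hp, hmax⟩ := Finset.exists_max_image (Finset.Icc 1 N ×ˢ Finset.Icc 1 N)
    (fun p => f p.1 p.2) ⟨(1, 1), by simp [hN]⟩
  simp only [Finset.mem_product, Finset.mem_Icc] at hp hmax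
  exact ⟨p.1, p.2, ⟨hp.1.1, hp.1.2, hp.2.1, hp.2.2⟩,
    fun n m h1 h2 h3 h4 => hmax (n, m) ⟨⟨h1, h2⟩, ⟨h3, h4⟩⟩⟩

lemma exists_exponent (r q d : ℝ) (hr : 0 < r) (hq : q < 1) (hd : 0 < d) :
    ∃ e, 0 < e ∧ e ≤ d ∧ q ≤ r ^ e := by
  have hc : Filter.Tendsto (fun e : ℝ => r ^ e) (nhdsWithin 0 (Ioi 0)) (nhds (r ^ (0:ℝ))) :=
    ((Real.continuous_const_rpow hr.ne').tendsto 0).mono_left nhdsWithin_le_nhds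
  rw [Real.rpow_zero] at hc
  have h1 := hc.eventually (lt_mem_nhds hq)
  have h2 : ∀ᶠ e in nhdsWithin (0:ℝ) (Ioi 0), e ∈ Ioc 0 d := Ioc_mem_nhdsGT hd
  obtain ⟨e, he1, he2⟩ := (h1.and h2).exists
  exact ⟨e, he2.1, he2.2, he1.le⟩

lemma knots_mono (N : ℕ) (x : ℕ → ℝ) (hx : ∀ i < N, x i < x (i+1)) :
    ∀ j ≤ N, ∀ i ≤ j, x i ≤ x j := by
  intro j
  induction j with
  | zero => intro _ i hi; rw [Nat.le_zero.mp hi]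
  | succ j ih =>
    intro hj i hi
    rcases Nat.lt_or_ge i (j+1) with h | h
    · exact (ih (by omega) i (by omega)).trans (hx j (by omega)).le
    · rw [le_antisymm hi h]

lemma knots_cell (N : ℕ) (x : ℕ → ℝ) (X : ℝ) (h0 : x 0 ≤ X) (hN : 1 ≤ N) (h1 : X ≤ x N) :
    ∃ n, 1 ≤ n ∧ n ≤ N ∧ x (n-1) ≤ X ∧ X ≤ x n := by
  classical
  have hex : ∃ n, 1 ≤ n ∧ X ≤ x n := ⟨N, hN, h1⟩
  refine ⟨Nat.find hex, (Nat.find_spec hex).1, Nat.find_min' hex ⟨hN, h1⟩, ?_,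
    (Nat.find_spec hex).2⟩
  have hpos := (Nat.find_spec hex).1
  rcases Nat.eq_or_lt_of_le hpos with h | h
  · rw [← h]; exact h0
  · by_contra hc
    exact Nat.find_min hex (m := Nat.find hex - 1) (by omega) ⟨by omega, (not_le.mp hc).le⟩

lemma phi_diff (N : ℕ) (x : ℕ → ℝ) (hx0 : x 0 = 0) (hxN : x N = 1/2) (n : ℕ) (X X' : ℝ) :
    phiMap N x n X - phiMap N x n X' = 2 * (x n - x (n-1)) * (X - X') := by
  unfold phiMap; rw [hx0, hxN]; ring

/-- every point of a cell is hit by the corresponding affine map -/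
lemma phi_surj (N : ℕ) (x : ℕ → ℝ) (hx0 : x 0 = 0) (hxN : x N = 1/2) (n : ℕ)
    (hlt : x (n-1) < x n) (X : ℝ) (h0 : x (n-1) ≤ X) (h1 : X ≤ x n) :
    ∃ U ∈ Icc (0:ℝ) (1/2), phiMap N x n U = X := by
  have hp : 0 < x n - x (n-1) := by linarith
  refine ⟨(X - x (n-1)) / (2 * (x n - x (n-1))), ⟨by apply div_nonneg <;> linarith, ?_⟩, ?_⟩
  · rw [div_le_iff₀ (by linarith)]; linarith
  · unfold phiMap; rw [hx0, hxN]; field_simp; ring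

lemma limit_bound (u v s E : ℝ) (hs0 : 0 ≤ s) (hs1 : s < 1)
    (h : ∀ k : ℕ, u ≤ v + s ^ k * E) : u ≤ v := by
  have hl : Filter.Tendsto (fun k : ℕ => v + s ^ k * E) Filter.atTop (nhds (v + 0 * E)) :=
    ((tendsto_pow_atTop_nhds_zero_of_lt_one hs0 hs1).mul_const E).const_add v
  have := ge_of_tendsto' hl h
  simpa using this

/-- one-variable Hölder estimate, with the other variable as a parameter -/
lemma key_one (N : ℕ) (hN : 1 ≤ N) (x : ℕ → ℝ) (hx : ∀ i < N, x i < x (i+1))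
    (hx0 : x 0 = 0) (hxN : x N = 1/2) (T : Set ℝ) (F : ℝ → ℝ → ℝ) (B : ℝ)
    (hB : ∀ X ∈ Icc (0:ℝ) (1/2), ∀ y ∈ T, |F X y| ≤ B) (hB0 : 0 ≤ B)
    (s : ℝ) (hs0 : 0 ≤ s) (hs1 : s < 1) (L : ℝ) (hL : 0 ≤ L) (d : ℝ) (hd : 0 < d)
    (h : ∀ y ∈ T, ∃ v ∈ T, ∀ n, 1 ≤ n → n ≤ N → ∀ X ∈ Icc (0:ℝ) (1/2), ∀ X' ∈ Icc (0:ℝ) (1/2),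
      |F (phiMap N x n X) y - F (phiMap N x n X') y|
        ≤ s * |F X v - F X' v| + L * |X - X'| ^ d) :
    ∃ e, 0 < e ∧ e ≤ d ∧ ∃ C, 0 ≤ C ∧ ∀ X ∈ Icc (0:ℝ) (1/2), ∀ X' ∈ Icc (0:ℝ) (1/2), ∀ y ∈ T,
      |F X y - F X' y| ≤ C * |X - X'| ^ e := by
  have hlt : ∀ n, 1 ≤ n → n ≤ N → x (n-1) < x n := by
    intro n h1 h2
    have := hx (n-1) (by omega)
    rwa [Nat.sub_add_cancel h1] at this
  have hmono := knots_mono N x hx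
  -- minimal ratio
  obtain ⟨r, hr0, hr⟩ : ∃ r, 0 < r ∧ ∀ n, 1 ≤ n → n ≤ N → r ≤ 2 * (x n - x (n-1)) := by
    obtain ⟨n₀, _, ⟨h1, h2, _, _⟩, hm⟩ := grid_max N hN (fun n _ => - (2 * (x n - x (n-1))))
    refine ⟨2 * (x n₀ - x (n₀-1)), by linarith [hlt n₀ h1 h2], fun n h3 h4 => ?_⟩
    have := hm n 1 h3 h4 le_rfl hN
    linarith
  obtain ⟨e, he0, hed, hre⟩ := exists_exponent r ((1+s)/2) d hr0 (by linarith) hd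
  have hr2 : 0 < (r/2) ^ e := Real.rpow_pos_of_pos (by linarith) e
  set K₀ : ℝ := 2 * L / (1 - s) + 2 * B / (r/2) ^ e with hK₀
  have h1s : 0 < 1 - s := by linarith
  have hA : 0 ≤ 2 * L / (1 - s) := by positivity
  have hA' : 0 ≤ 2 * B / (r/2) ^ e := by positivity
  have hK0 : 0 ≤ K₀ := by positivity
  -- far points
  have far : ∀ X ∈ Icc (0:ℝ) (1/2), ∀ X' ∈ Icc (0:ℝ) (1/2), ∀ y ∈ T, ∀ D, r/2 ≤ D →
      |F X y - F X' y| ≤ K₀ * D ^ e := by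
    intro X hX X' hX' y hy D hD
    have h1 : |F X y - F X' y| ≤ 2 * B := by
      have := abs_sub (F X y) (F X' y)
      linarith [hB X hX y hy, hB X' hX' y hy]
    have h2 : (r/2) ^ e ≤ D ^ e := Real.rpow_le_rpow (by linarith) hD he0.le
    calc |F X y - F X' y| ≤ 2 * B := h1
      _ = 2 * B / (r/2) ^ e * (r/2) ^ e := by field_simp
      _ ≤ K₀ * D ^ e := by
        apply mul_le_mul (by linarith) h2 hr2.le hK0
  -- contraction step
  have step : ∀ K, K₀ ≤ K → ∀ E, ∀ y ∈ T, ∃ v ∈ T, ∀ n, 1 ≤ n → n ≤ N →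
      ∀ X ∈ Icc (0:ℝ) (1/2), ∀ X' ∈ Icc (0:ℝ) (1/2),
      |F X v - F X' v| ≤ K * |X - X'| ^ e + E →
      |F (phiMap N x n X) y - F (phiMap N x n X') y|
        ≤ K * |phiMap N x n X - phiMap N x n X'| ^ e + s * E := by
    intro K hK E y hy
    obtain ⟨v, hv, hh⟩ := h y hy
    refine ⟨v, hv, fun n h1 h2 X hX X' hX' hle => ?_⟩
    have h3 := hh n h1 h2 X hX X' hX'
    have hKp : 0 ≤ K := hK0.trans hK
    have hD0 : 0 ≤ |X - X'| := abs_nonneg _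
    have hDe : 0 ≤ |X - X'| ^ e := Real.rpow_nonneg hD0 e
    have hD1 : |X - X'| ≤ 1 := by
      rw [abs_le]; constructor <;> linarith [hX.1, hX.2, hX'.1, hX'.2]
    have h4 : |X - X'| ^ d ≤ |X - X'| ^ e := by
      rcases hD0.eq_or_lt with h0 | h0
      · rw [← h0, Real.zero_rpow hd.ne', Real.zero_rpow he0.ne']
      · exact Real.rpow_le_rpow_of_exponent_ge h0 hD1 hed
    have h5 : r ^ e * |X - X'| ^ e ≤ |phiMap N x n X - phiMap N x n X'| ^ e := by
      rw [← Real.mul_rpow hr0.le hD0, phi_diff N x hx0 hxN, abs_mul,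
        abs_of_pos (show 0 < 2 * (x n - x (n-1)) by linarith [hlt n h1 h2])]
      exact Real.rpow_le_rpow (mul_nonneg hr0.le hD0)
        (mul_le_mul_of_nonneg_right (hr n h1 h2) hD0) he0.le
    have h6 : L ≤ K * ((1 - s)/2) := by
      have : 2 * L / (1 - s) ≤ K := by linarith
      rw [div_le_iff₀ h1s] at this
      linarith
    calc _ ≤ s * |F X v - F X' v| + L * |X - X'| ^ d := h3
      _ ≤ s * (K * |X - X'| ^ e + E) + (K * ((1 - s)/2)) * |X - X'| ^ e := by
        apply add_le_add (mul_le_mul_of_nonneg_left hle hs0)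
        exact mul_le_mul h6 h4 (Real.rpow_nonneg hD0 d) (by positivity)
      _ = K * ((1+s)/2 * |X - X'| ^ e) + s * E := by ring
      _ ≤ K * (r ^ e * |X - X'| ^ e) + s * E := by gcongr
      _ ≤ _ := by gcongr
  have triv : ∀ X ∈ Icc (0:ℝ) (1/2), ∀ X' ∈ Icc (0:ℝ) (1/2), ∀ y ∈ T, ∀ K, 0 ≤ K →
      |F X y - F X' y| ≤ K * |X - X'| ^ e + s ^ 0 * (2 * B) := by
    intro X hX X' hX' y hy K hK
    have h1 : |F X y - F X' y| ≤ 2 * B := by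
      have := abs_sub (F X y) (F X' y)
      linarith [hB X hX y hy, hB X' hX' y hy]
    have : 0 ≤ K * |X - X'| ^ e := by positivity
    simp only [pow_zero, one_mul]; linarith
  -- estimate at an endpoint
  have bdry : ∀ p ∈ Icc (0:ℝ) (1/2), ∀ n, 1 ≤ n → n ≤ N → phiMap N x n p = p →
      (∀ X ∈ Icc (0:ℝ) (1/2), (x (n-1) ≤ X ∧ X ≤ x n) ∨ r/2 ≤ |X - p|) →
      ∀ X ∈ Icc (0:ℝ) (1/2), ∀ y ∈ T, |F X y - F p y| ≤ K₀ * |X - p| ^ e := by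
    intro p hp n h1 h2 hfix hdich
    have main : ∀ k : ℕ, ∀ X ∈ Icc (0:ℝ) (1/2), ∀ y ∈ T,
        |F X y - F p y| ≤ K₀ * |X - p| ^ e + s ^ k * (2 * B) := by
      intro k
      induction k with
      | zero => intro X hX y hy; exact triv X hX p hp y hy K₀ hK0
      | succ k ih =>
        intro X hX y hy
        rcases hdich X hX with ⟨h3, h4⟩ | h3
        · obtain ⟨v, hv, hs⟩ := step K₀ le_rfl (s ^ k * (2 * B)) y hy
          obtain ⟨U, hU, rfl⟩ := phi_surj N x hx0 hxN n (hlt n h1 h2) X h3 h4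
          have := hs n h1 h2 U hU p hp (ih U hU v hv)
          rw [hfix] at this
          rw [pow_succ']; linarith
        · have := far X hX p hp y hy _ h3
          have h5 : 0 ≤ s ^ (k+1) * (2 * B) := by positivity
          linarith
    intro X hX y hy
    exact limit_bound _ _ s (2 * B) hs0 hs1 (fun k => main k X hX y hy)
  have h0I : (0:ℝ) ∈ Icc (0:ℝ) (1/2) := by constructor <;> norm_num
  have h1I : (1/2:ℝ) ∈ Icc (0:ℝ) (1/2) := by constructor <;> norm_num
  have left := bdry 0 h0I 1 le_rfl hN (by unfold phiMap; simp [hx0]) (by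
    intro X hX
    by_cases hc : X ≤ x 1
    · left; exact ⟨by simpa [hx0] using hX.1, hc⟩
    · right
      have := hr 1 le_rfl hN
      simp only [Nat.sub_self, hx0] at this
      rw [sub_zero, abs_of_nonneg hX.1]; linarith)
  have right := bdry (1/2) h1I N hN le_rfl (by unfold phiMap; rw [hx0, hxN]; ring) (by
    intro X hX
    by_cases hc : x (N-1) ≤ X
    · left; exact ⟨hc, by rw [hxN]; exact hX.2⟩
    · right
      have := hr N hN le_rfl
      rw [hxN] at this
      rw [abs_sub_comm, abs_of_nonneg (by linarith [hX.2])]; linarith)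
  have knotI : ∀ n ≤ N, x n ∈ Icc (0:ℝ) (1/2) := by
    intro n hn
    exact ⟨by rw [← hx0]; exact hmono n hn 0 (Nat.zero_le _),
      by rw [← hxN]; exact hmono N le_rfl n hn⟩
  have phi0 : ∀ n, phiMap N x n 0 = x (n-1) := by intro n; unfold phiMap; rw [hx0]; ring
  have phi1 : ∀ n, phiMap N x n (1/2) = x n := by intro n; unfold phiMap; rw [hx0, hxN]; ring
  have cellL : ∀ n, 1 ≤ n → n ≤ N → ∀ X, x (n-1) ≤ X → X ≤ x n → ∀ y ∈ T,
      |F X y - F (x (n-1)) y| ≤ K₀ * |X - x (n-1)| ^ e := by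
    intro n h1 h2 X h3 h4 y hy
    obtain ⟨v, hv, hs⟩ := step K₀ le_rfl 0 y hy
    obtain ⟨U, hU, rfl⟩ := phi_surj N x hx0 hxN n (hlt n h1 h2) X h3 h4
    have := hs n h1 h2 U hU 0 h0I (by simpa using left U hU v hv)
    rw [phi0] at this; linarith
  have cellR : ∀ n, 1 ≤ n → n ≤ N → ∀ X, x (n-1) ≤ X → X ≤ x n → ∀ y ∈ T,
      |F X y - F (x n) y| ≤ K₀ * |X - x n| ^ e := by
    intro n h1 h2 X h3 h4 y hy
    obtain ⟨v, hv, hs⟩ := step K₀ le_rfl 0 y hy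
    obtain ⟨U, hU, rfl⟩ := phi_surj N x hx0 hxN n (hlt n h1 h2) X h3 h4
    have := hs n h1 h2 U hU (1/2) h1I (by rw [add_zero]; exact right U hU v hv)
    rw [phi1] at this; linarith
  have main : ∀ k : ℕ, ∀ X ∈ Icc (0:ℝ) (1/2), ∀ X' ∈ Icc (0:ℝ) (1/2), X ≤ X' → ∀ y ∈ T,
      |F X y - F X' y| ≤ (3 * K₀) * |X - X'| ^ e + s ^ k * (2 * B) := by
    intro k
    induction k with
    | zero => intro X hX X' hX' _ y hy; exact triv X hX X' hX' y hy _ (by positivity)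
    | succ k ih =>
      intro X hX X' hX' hle y hy
      have hE : 0 ≤ s ^ (k+1) * (2 * B) := by positivity
      obtain ⟨n, h1, h2, h3, h4⟩ := knots_cell N x X (by rw [hx0]; exact hX.1) hN
        (by rw [hxN]; exact hX.2)
      obtain ⟨n', h1', h2', h3', h4'⟩ := knots_cell N x X' (by rw [hx0]; exact hX'.1) hN
        (by rw [hxN]; exact hX'.2)
      rcases lt_trichotomy n n' with hn | hn | hn
      · have hk : x n ≤ x (n'-1) := hmono (n'-1) (by omega) n (by omega)
        have b1 := cellR n h1 h2 X h3 h4 y hy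
        have b2 := cellL n' h1' h2' X' h3' h4' y hy
        have d0 : |X - X'| = X' - X := by rw [abs_sub_comm, abs_of_nonneg (by linarith)]
        have c1 : |X - x n| ^ e ≤ |X - X'| ^ e := by
          apply Real.rpow_le_rpow (abs_nonneg _) _ he0.le
          rw [d0, abs_sub_comm, abs_of_nonneg (by linarith)]; linarith
        have c2 : |X' - x (n'-1)| ^ e ≤ |X - X'| ^ e := by
          apply Real.rpow_le_rpow (abs_nonneg _) _ he0.le
          rw [d0, abs_of_nonneg (by linarith)]; linarith
        have b3 : |F (x n) y - F (x (n'-1)) y| ≤ K₀ * |X - X'| ^ e := by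
          rcases Nat.eq_or_lt_of_le (show n ≤ n'-1 by omega) with hq | hq
          · rw [← hq, sub_self, abs_zero]; positivity
          · apply far _ (knotI n h2) _ (knotI (n'-1) (by omega)) y hy
            have q1 := hr (n+1) (by omega) (by omega)
            have q2 := hmono (n'-1) (by omega) (n+1) (by omega)
            rw [Nat.add_sub_cancel] at q1
            rw [d0]; linarith
        have c1' := mul_le_mul_of_nonneg_left c1 hK0
        have c2' := mul_le_mul_of_nonneg_left c2 hK0
        have t1 := abs_sub_le (F X y) (F (x n) y) (F X' y)
        have t2 := abs_sub_le (F (x n) y) (F (x (n'-1)) y) (F X' y)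
        rw [abs_sub_comm (F X' y)] at b2
        linarith
      · subst hn
        obtain ⟨v, hv, hs⟩ := step (3 * K₀) (by linarith) (s ^ k * (2 * B)) y hy
        obtain ⟨U, hU, rfl⟩ := phi_surj N x hx0 hxN n (hlt n h1 h2) X h3 h4
        obtain ⟨U', hU', rfl⟩ := phi_surj N x hx0 hxN n (hlt n h1 h2) X' h3' h4'
        have hUU : U ≤ U' := by
          have hq := phi_diff N x hx0 hxN n U U'
          have hp := hlt n h1 h2
          by_contra hc
          have : 0 < 2 * (x n - x (n-1)) * (U - U') :=
            mul_pos (by linarith) (by linarith [not_le.mp hc])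
          linarith
        have := hs n h1 h2 U hU U' hU' (ih U hU U' hU' hUU v hv)
        rw [pow_succ']; linarith
      · have hk : x n' ≤ x (n-1) := hmono (n-1) (by omega) n' (by omega)
        have hXX : X = X' := by linarith
        rw [hXX, sub_self, abs_zero]; positivity
  refine ⟨e, he0, hed, 3 * K₀, by positivity, fun X hX X' hX' y hy => ?_⟩
  rcases le_total X X' with hle | hle
  · exact limit_bound _ _ s (2 * B) hs0 hs1 (fun k => main k X hX X' hX' hle y hy)
  · rw [abs_sub_comm, abs_sub_comm X]
    exact limit_bound _ _ s (2 * B) hs0 hs1 (fun k => main k X' hX' X hX hle y hy)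

/-- two-variable Hölder estimate for a self-affine function -/
lemma key_two (N : ℕ) (hN : 1 ≤ N) (x y : ℕ → ℝ) (hx : ∀ i < N, x i < x (i+1))
    (hy : ∀ i < N, y i < y (i+1))
    (hx0 : x 0 = 0) (hy0 : y 0 = 0) (hxN : x N = 1/2) (hyN : y N = 1/2)
    (a : ℕ → ℕ → ℝ) (ha : ∀ n m, 1 ≤ n → n ≤ N → 1 ≤ m → m ≤ N → |a n m| < 1)
    (F : ℝ → ℝ → ℝ)
    (hF : ContinuousOn (fun P : ℝ × ℝ => F P.1 P.2) (Icc (0:ℝ) (1/2) ×ˢ Icc (0:ℝ) (1/2)))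
    (R : ℕ → ℕ → ℝ → ℝ → ℝ)
    (hR : ∀ n m, 1 ≤ n → n ≤ N → 1 ≤ m → m ≤ N → ∀ X ∈ Icc (0:ℝ) (1/2), ∀ Y ∈ Icc (0:ℝ) (1/2),
      F (phiMap N x n X) (phiMap N y m Y) = a n m * F X Y + R n m X Y)
    (d : ℝ) (hd : 0 < d) (hd1 : d ≤ 1) (L : ℕ → ℕ → ℝ)
    (hL : ∀ n m, 1 ≤ n → n ≤ N → 1 ≤ m → m ≤ N →
      ∀ X ∈ Icc (0:ℝ) (1/2), ∀ Y ∈ Icc (0:ℝ) (1/2),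
      ∀ X' ∈ Icc (0:ℝ) (1/2), ∀ Y' ∈ Icc (0:ℝ) (1/2),
      |R n m X Y - R n m X' Y'| ≤ L n m * (|X - X'| + |Y - Y'|) ^ d) :
    ∃ e ∈ Set.Ioc (0:ℝ) 1, ∃ C : ℝ, 0 ≤ C ∧
      ∀ X ∈ Icc (0:ℝ) (1/2), ∀ Y ∈ Icc (0:ℝ) (1/2),
        ∀ X' ∈ Icc (0:ℝ) (1/2), ∀ Y' ∈ Icc (0:ℝ) (1/2),
          |F X Y - F X' Y'| ≤ C * (|X - X'| + |Y - Y'|) ^ e := by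
  obtain ⟨B, hB⟩ := (isCompact_Icc.prod isCompact_Icc).exists_bound_of_continuousOn hF
  have hB' : ∀ X ∈ Icc (0:ℝ) (1/2), ∀ Y ∈ Icc (0:ℝ) (1/2), |F X Y| ≤ B :=
    fun X hX Y hY => hB (X, Y) ⟨hX, hY⟩
  have h0I : (0:ℝ) ∈ Icc (0:ℝ) (1/2) := by constructor <;> norm_num
  have hB0 : 0 ≤ B := (abs_nonneg _).trans (hB' 0 h0I 0 h0I)
  obtain ⟨n₀, m₀, ⟨i1, i2, i3, i4⟩, hs⟩ := grid_max N hN (fun n m => |a n m|)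
  obtain ⟨n₁, m₁, -, hLm⟩ := grid_max N hN (fun n m => |L n m|)
  have hs1 := ha n₀ m₀ i1 i2 i3 i4
  have hcell : ∀ w : ℕ → ℝ, (∀ i < N, w i < w (i+1)) → w 0 = 0 → w N = 1/2 →
      ∀ Y ∈ Icc (0:ℝ) (1/2), ∃ m, 1 ≤ m ∧ m ≤ N ∧ ∃ v ∈ Icc (0:ℝ) (1/2), phiMap N w m v = Y := by
    intro w hw hw0 hwN Y hY
    obtain ⟨m, h1, h2, h3, h4⟩ := knots_cell N w Y (by rw [hw0]; exact hY.1) hN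
      (by rw [hwN]; exact hY.2)
    have hlt := hw (m-1) (by omega)
    rw [Nat.sub_add_cancel h1] at hlt
    exact ⟨m, h1, h2, phi_surj N w hw0 hwN m hlt Y h3 h4⟩
  have est : ∀ n m, 1 ≤ n → n ≤ N → 1 ≤ m → m ≤ N →
      ∀ X ∈ Icc (0:ℝ) (1/2), ∀ Y ∈ Icc (0:ℝ) (1/2),
      ∀ X' ∈ Icc (0:ℝ) (1/2), ∀ Y' ∈ Icc (0:ℝ) (1/2),
      |F (phiMap N x n X) (phiMap N y m Y) - F (phiMap N x n X') (phiMap N y m Y')|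
       ≤ |a n₀ m₀| * |F X Y - F X' Y'| + |L n₁ m₁| * (|X - X'| + |Y - Y'|) ^ d := by
    intro n m h1 h2 h3 h4 X hX Y hY X' hX' Y' hY'
    rw [hR n m h1 h2 h3 h4 X hX Y hY, hR n m h1 h2 h3 h4 X' hX' Y' hY']
    have e1 : a n m * F X Y + R n m X Y - (a n m * F X' Y' + R n m X' Y')
      = a n m * (F X Y - F X' Y') + (R n m X Y - R n m X' Y') := by ring
    rw [e1]
    refine (abs_add_le _ _).trans (add_le_add ?_ ?_)
    · rw [abs_mul]
      exact mul_le_mul_of_nonneg_right (hs n m h1 h2 h3 h4) (abs_nonneg _)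
    · refine (hL n m h1 h2 h3 h4 X hX Y hY X' hX' Y' hY').trans ?_
      exact mul_le_mul_of_nonneg_right ((le_abs_self _).trans (hLm n m h1 h2 h3 h4))
        (by positivity)
  obtain ⟨e₁, p1, q1, C₁, c1, H1⟩ := key_one N hN x hx hx0 hxN (Icc (0:ℝ) (1/2)) F B hB' hB0
    _ (abs_nonneg (a n₀ m₀)) hs1 _ (abs_nonneg (L n₁ m₁)) d hd (by
      intro Y hY
      obtain ⟨m, h1, h2, v, hv, rfl⟩ := hcell y hy hy0 hyN Y hY
      refine ⟨v, hv, fun n h3 h4 X hX X' hX' => ?_⟩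
      have := est n m h3 h4 h1 h2 X hX v hv X' hX' v hv
      simpa using this)
  obtain ⟨e₂, p2, q2, C₂, c2, H2⟩ := key_one N hN y hy hy0 hyN (Icc (0:ℝ) (1/2))
    (fun Y X => F X Y) B (fun Y hY X hX => hB' X hX Y hY) hB0
    _ (abs_nonneg (a n₀ m₀)) hs1 _ (abs_nonneg (L n₁ m₁)) d hd (by
      intro X hX
      obtain ⟨n, h1, h2, v, hv, rfl⟩ := hcell x hx hx0 hxN X hX
      refine ⟨v, hv, fun m h3 h4 Y hY Y' hY' => ?_⟩
      have := est n m h1 h2 h3 h4 v hv Y hY v hv Y' hY'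
      simpa using this)
  have he : 0 < min e₁ e₂ := lt_min p1 p2
  refine ⟨min e₁ e₂, ⟨he, (min_le_left _ _).trans (q1.trans hd1)⟩, C₁ + C₂, by positivity, ?_⟩
  intro X hX Y hY X' hX' Y' hY'
  have pw : ∀ u w e : ℝ, 0 ≤ u → u ≤ w → w ≤ 1 → min e₁ e₂ ≤ e → u ^ e ≤ w ^ (min e₁ e₂) := by
    intro u w e hu huw hw hee
    refine le_trans ?_ (Real.rpow_le_rpow hu huw he.le)
    rcases hu.eq_or_lt with h0 | h0
    · rw [← h0, Real.zero_rpow (by linarith), Real.zero_rpow he.ne']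
    · exact Real.rpow_le_rpow_of_exponent_ge h0 (huw.trans hw) hee
  have dX : |X - X'| ≤ 1/2 := by rw [abs_le]; constructor <;> linarith [hX.1, hX.2, hX'.1, hX'.2]
  have dY : |Y - Y'| ≤ 1/2 := by rw [abs_le]; constructor <;> linarith [hY.1, hY.2, hY'.1, hY'.2]
  have aX := abs_nonneg (X - X')
  have aY := abs_nonneg (Y - Y')
  have w1 := mul_le_mul_of_nonneg_left
    (pw |X - X'| (|X - X'| + |Y - Y'|) e₁ aX (by linarith) (by linarith) (min_le_left _ _)) c1
  have w2 := mul_le_mul_of_nonneg_left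
    (pw |Y - Y'| (|X - X'| + |Y - Y'|) e₂ aY (by linarith) (by linarith) (min_le_right _ _)) c2
  have g1 := H1 X hX X' hX' Y hY
  have g2 := H2 Y hY Y' hY' X' hX'
  have t := abs_sub_le (F X Y) (F X' Y) (F X' Y')
  linarith

lemma bilin_lip (e f g k X Y X' Y' : ℝ) (hX' : X' ∈ Icc (0:ℝ) (1/2))
    (hY : Y ∈ Icc (0:ℝ) (1/2)) :
    |(e * X + f * Y + g * X * Y + k) - (e * X' + f * Y' + g * X' * Y' + k)|
      ≤ (|e| + |f| + |g|) * (|X - X'| + |Y - Y'|) := by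
  have h : (e * X + f * Y + g * X * Y + k) - (e * X' + f * Y' + g * X' * Y' + k)
    = e * (X - X') + f * (Y - Y') + (g * Y * (X - X') + g * X' * (Y - Y')) := by ring
  rw [h]
  have aX := abs_nonneg (X - X')
  have aY := abs_nonneg (Y - Y')
  have h1 := abs_add_le (e * (X - X') + f * (Y - Y')) (g * Y * (X - X') + g * X' * (Y - Y'))
  have h2 := abs_add_le (e * (X - X')) (f * (Y - Y'))
  have h3 := abs_add_le (g * Y * (X - X')) (g * X' * (Y - Y'))
  simp only [abs_mul] at h1 h2 h3
  rw [abs_of_nonneg hY.1, abs_of_nonneg hX'.1] at h3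
  have k1 : |g| * Y * |X - X'| ≤ |g| * 1 * |X - X'| := by
    gcongr; linarith [hY.2]
  have k2 : |g| * X' * |Y - Y'| ≤ |g| * 1 * |Y - Y'| := by
    gcongr; linarith [hX'.2]
  have k3 := mul_nonneg (abs_nonneg e) aY
  have k4 := mul_nonneg (abs_nonneg f) aX
  nlinarith

/-- the CHFIS component `F₁` on `[0,1/2] × [0,1/2]` is Hölder (Lipschitz of
some order `δ ∈ (0,1]`) with respect to the Manhattan metric. -/
theorem chfis_holder (N : ℕ) (x y : ℕ → ℝ) (z t : ℕ → ℕ → ℝ) (a b c : ℕ → ℕ → ℝ)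
    (hD : DataOK N N x y a b c)
    (hx0 : x 0 = 0) (hy0 : y 0 = 0) (hxN : x N = 1/2) (hyN : y N = 1/2)
    (F₁ F₂ : ℝ → ℝ → ℝ) (hF : IsCHFIS N N x y z t a b c F₁ F₂) :
    ∃ δ ∈ Set.Ioc (0:ℝ) 1, ∃ C : ℝ, 0 ≤ C ∧
      ∀ X ∈ Icc (0:ℝ) (1/2), ∀ Y ∈ Icc (0:ℝ) (1/2),
        ∀ X' ∈ Icc (0:ℝ) (1/2), ∀ Y' ∈ Icc (0:ℝ) (1/2),
          |F₁ X Y - F₁ X' Y'| ≤ C * (|X - X'| + |Y - Y'|) ^ δ := by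
  obtain ⟨hN, -, hx, hy, ha, hbc⟩ := hD
  obtain ⟨hc1, hc2, -, hfun⟩ := hF
  rw [hx0, hy0, hxN, hyN] at hc1 hc2
  rw [hx0, hy0, hxN, hyN] at hfun
  have hcc : ∀ n m, 1 ≤ n → n ≤ N → 1 ≤ m → m ≤ N → |c n m| < 1 := by
    intro n m h1 h2 h3 h4
    linarith [hbc n m h1 h2 h3 h4, abs_nonneg (b n m)]
  obtain ⟨e, ⟨he0, he1⟩, C, hC, H⟩ := key_two N hN x y hx hy hx0 hy0 hxN hyN c hcc F₂ hc2
    (fun n m => qMap N N x y t c n m)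
    (fun n m h1 h2 h3 h4 X hX Y hY => (hfun n m h1 h2 h3 h4 X hX Y hY).2) 1 one_pos le_rfl
    (fun n m => |eCoef N N x y t t c (fun _ _ => 0) n m| + |fCoef N N x y t t c (fun _ _ => 0) n m|
      + |gCoef N N x y t t c (fun _ _ => 0) n m|)
    (by
      intro n m _ _ _ _ X hX Y hY X' hX' Y' hY'
      rw [Real.rpow_one]
      exact bilin_lip _ _ _ _ X Y X' Y' hX' hY)
  refine key_two N hN x y hx hy hx0 hy0 hxN hyN a ha F₁ hc1
    (fun n m X Y => b n m * F₂ X Y + pMap N N x y z t a b n m X Y)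
    (fun n m h1 h2 h3 h4 X hX Y hY => by
      rw [(hfun n m h1 h2 h3 h4 X hX Y hY).1, add_assoc]) e he0 he1
    (fun n m => |b n m| * C + (|eCoef N N x y z t a b n m| + |fCoef N N x y z t a b n m|
      + |gCoef N N x y z t a b n m|)) ?_
  intro n m _ _ _ _ X hX Y hY X' hX' Y' hY'
  have h1 := H X hX Y hY X' hX' Y' hY'
  have h2 : |pMap N N x y z t a b n m X Y - pMap N N x y z t a b n m X' Y'| ≤ _ :=
    bilin_lip _ _ _ _ X Y X' Y' hX' hY
  have dX : |X - X'| ≤ 1/2 := by rw [abs_le]; constructor <;> linarith [hX.1, hX.2, hX'.1, hX'.2]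
  have dY : |Y - Y'| ≤ 1/2 := by rw [abs_le]; constructor <;> linarith [hY.1, hY.2, hY'.1, hY'.2]
  have h3 : |X - X'| + |Y - Y'| ≤ (|X - X'| + |Y - Y'|) ^ e := by
    have h0 : 0 ≤ |X - X'| + |Y - Y'| := by positivity
    rcases h0.eq_or_lt with h0 | h0
    · rw [← h0, Real.zero_rpow he0.ne']
    · have := Real.rpow_le_rpow_of_exponent_ge h0 (by linarith) he1
      rwa [Real.rpow_one] at this
  have e1 : b n m * F₂ X Y + pMap N N x y z t a b n m X Y
      - (b n m * F₂ X' Y' + pMap N N x y z t a b n m X' Y')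
      = b n m * (F₂ X Y - F₂ X' Y')
        + (pMap N N x y z t a b n m X Y - pMap N N x y z t a b n m X' Y') := by ring
  show |b n m * F₂ X Y + pMap N N x y z t a b n m X Y
      - (b n m * F₂ X' Y' + pMap N N x y z t a b n m X' Y')| ≤ _
  rw [e1, add_mul]
  refine (abs_add_le _ _).trans (add_le_add ?_ ?_)
  · rw [abs_mul, mul_assoc]
    exact mul_le_mul_of_nonneg_left h1 (abs_nonneg _)
  · exact h2.trans (mul_le_mul_of_nonneg_left h3 (by positivity))

end
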